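/- Let H be a real Hilbert space, w̄ ∈ H and ε > 0. Let {xₙ} be a sequence in H, {θₙ} a nondecreasing sequence with θ₁ = 0 and 0 ≤ θₙ ≤ θₙ₊₁, and {φₙ} a sequence in (0, 1] such that for every n ≥ 1 one of the following holds: (i) φₙ, φₙ₊₁ ∈ (0, 1/2), φₙ⁻¹ − φₙ₊₁⁻¹ + 3 > 0 and θₙ₊₁ ≤ (1/(2(φₙ₊₁⁻¹ − 2)))(φₙ⁻¹ + φₙ₊₁⁻¹ − 1 − Δₙ) with Δₙ := √((φₙ⁻¹ + φₙ₊₁⁻¹ − 1)² − 4(φₙ⁻¹ − 1 − ε)(φₙ₊₁⁻¹ − 2)); or (ii) φₙ = φₙ₊₁ = 1/2 and θₙ₊₁ ≤ (1 − ε)/3; or (iii) φₙ, φₙ₊₁ ∈ (1/2, 1 − ε] and θₙ₊₁ ≤ √(pₙ² + qₙ) − pₙ with pₙ := (φₙ⁻¹ + φₙ₊₁⁻¹ − 1)/(2(2 − φₙ₊₁⁻¹)) and qₙ := (φₙ⁻¹ − 1 − ε)/(2 − φₙ₊₁⁻¹). Suppose the sequences {wₙ}, {zₙ} in H satisfy wₙ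 = xₙ + θₙ(xₙ − xₙ₋₁), xₙ₊₁ = (1 − φₙ)wₙ + φₙzₙ and ‖zₙ − w̄‖ ≤ ‖wₙ − w̄‖ for all n ≥ 1. Define δₙ := (1 + θₙ)θₙ + φₙ⁻¹(1 − φₙ)(1 − θₙ)θₙ and Γₙ := ‖xₙ − w̄‖² − θₙ‖xₙ₋₁ − w̄‖² + δₙ‖xₙ − xₙ₋₁‖². Then Γₙ₊₁ ≤ Γₙ − ε‖xₙ₊₁ − xₙ‖² for all n ≥ 1. -/

import Mathlib

/-- Assumption 3.2 of the paper on the inertial factor `θ` and the relaxation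
parameter `φ`, at index `n` (one of cases (i), (ii), (iii)). -/
def Assumption32 (ε : ℝ) (θ φ : ℕ → ℝ) (n : ℕ) : Prop :=
  (φ n ∈ Set.Ioo (0:ℝ) (1/2) ∧ φ (n+1) ∈ Set.Ioo (0:ℝ) (1/2) ∧
    0 < (φ n)⁻¹ - (φ (n+1))⁻¹ + 3 ∧
    θ (n+1) ≤ (1/(2*((φ (n+1))⁻¹ - 2))) * ((φ n)⁻¹ + (φ (n+1))⁻¹ - 1 -
      Real.sqrt (((φ n)⁻¹ + (φ (n+1))⁻¹ - 1)^2
        - 4*((φ n)⁻¹ - 1 - ε)*((φ (n+1))⁻¹ - 2)))) ∨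
  (φ n = 1/2 ∧ φ (n+1) = 1/2 ∧ θ (n+1) ≤ (1 - ε)/3) ∨
  (φ n ∈ Set.Ioc (1/2 : ℝ) (1 - ε) ∧ φ (n+1) ∈ Set.Ioc (1/2 : ℝ) (1 - ε) ∧
    θ (n+1) ≤ Real.sqrt ((((φ n)⁻¹ + (φ (n+1))⁻¹ - 1)/(2*(2 - (φ (n+1))⁻¹)))^2
        + ((φ n)⁻¹ - 1 - ε)/(2 - (φ (n+1))⁻¹))
      - ((φ n)⁻¹ + (φ (n+1))⁻¹ - 1)/(2*(2 - (φ (n+1))⁻¹)))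

/-!
The identity `‖(1 - t)u + tv‖² = (1 - t)‖u‖² + t‖v‖² - t(1 - t)‖u - v‖²` handles the relaxation
(`t = φₙ`) and, used outside the segment, the inertial extrapolation (`t = -θₙ`); at `t = θₙ` it
bounds `‖xₙ₊₁ - wₙ‖²` below by `(1 - θₙ)(‖xₙ₊₁ - xₙ‖² - θₙ‖xₙ - xₙ₋₁‖²)`. Together they bound
`‖xₙ₊₁ - w̄‖² - θₙ‖xₙ - w̄‖² + (φₙ⁻¹ - 1)(1 - θₙ)‖xₙ₊₁ - xₙ‖²` by `Γₙ`, and since `θ` is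
nondecreasing it remains to see that `δₙ₊₁ + ε ≤ (φₙ⁻¹ - 1)(1 - θₙ₊₁)`. This is a quadratic
inequality in `θₙ₊₁` with leading coefficient `φₙ₊₁⁻¹ - 2`; Assumption 3.2 places `θₙ₊₁` below its
smallest root, its only root, or its positive root, according to the sign of that coefficient.
-/

/-- The paper's coefficient `δₙ` of `‖xₙ - xₙ₋₁‖²` in the Lyapunov sequence, as a function of the
inertial factor `θ` and the relaxation parameter `φ`. -/
noncomputable def inertialWeight (θ φ : ℝ) : ℝ :=
  (1 + θ) * θ + φ⁻¹ * (1 - φ) * (1 - θ) * θ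

section QuadraticInequalities

variable {c m d s : ℝ}

lemma quadratic_nonneg_of_le_smallest_root (hc : 0 < c)
    (hs : s ≤ 1 / (2 * c) * (m - √(m ^ 2 - 4 * d * c))) :
    0 ≤ c * s ^ 2 - m * s + d := by
  rw [one_div, ← div_eq_inv_mul, le_div_iff₀ (by positivity)] at hs
  have hsqrt : √(m ^ 2 - 4 * d * c) ≤ m - 2 * c * s := by linarith
  have hdiscrim : m ^ 2 - 4 * d * c ≤ (m - 2 * c * s) ^ 2 := (Real.sqrt_le_iff.1 hsqrt).2
  have hmul : 0 ≤ 4 * c * (c * s ^ 2 - m * s + d) := by linarith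
  exact nonneg_of_mul_nonneg_right hmul (by positivity)

lemma quadratic_le_of_le_positive_root (hc : 0 < c) (hm : 0 < m) (hs₀ : 0 ≤ s)
    (hs : s ≤ √((m / (2 * c)) ^ 2 + d / c) - m / (2 * c)) :
    c * s ^ 2 + m * s ≤ d := by
  have hpos : 0 < s + m / (2 * c) := by positivity
  have hsq : (s + m / (2 * c)) ^ 2 ≤ (m / (2 * c)) ^ 2 + d / c :=
    (Real.le_sqrt' hpos).1 (le_sub_iff_add_le.1 hs)
  calc c * s ^ 2 + m * s = c * ((s + m / (2 * c)) ^ 2 - (m / (2 * c)) ^ 2) := by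
        field_simp
        ring
    _ ≤ c * (d / c) := by gcongr; linarith
    _ = d := mul_div_cancel₀ d hc.ne'

end QuadraticInequalities

lemma inertialWeight_add_le_iff {φ φ' : ℝ} (hφ : φ ≠ 0) (hφ' : φ' ≠ 0) (ε s : ℝ) :
    inertialWeight s φ' + ε ≤ φ⁻¹ * (1 - φ) * (1 - s) ↔
      0 ≤ (φ'⁻¹ - 2) * s ^ 2 - (φ⁻¹ + φ'⁻¹ - 1) * s + (φ⁻¹ - 1 - ε) := by
  rw [inertialWeight, mul_one_sub φ⁻¹, mul_one_sub φ'⁻¹, inv_mul_cancel₀ hφ, inv_mul_cancel₀ hφ',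
    ← sub_nonneg]
  ring_nf

lemma Assumption32.inertialWeight_add_le {ε : ℝ} {θ φ : ℕ → ℝ} {n : ℕ}
    (h : Assumption32 ε θ φ n) (hθ : 0 ≤ θ (n + 1)) (hφ : φ n ≤ 1) :
    inertialWeight (θ (n + 1)) (φ (n + 1)) + ε ≤
      (φ n)⁻¹ * (1 - φ n) * (1 - θ (n + 1)) := by
  rcases h with ⟨hn, hn', -, hle⟩ | ⟨hn, hn', hle⟩ | ⟨hn, hn', hle⟩
  · rw [inertialWeight_add_le_iff hn.1.ne' hn'.1.ne']
    have hinv : 2 < (φ (n + 1))⁻¹ := by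
      simpa only [one_div, inv_inv] using inv_strictAnti₀ hn'.1 hn'.2
    exact quadratic_nonneg_of_le_smallest_root (sub_pos.2 hinv) hle
  · rw [hn, hn', inertialWeight_add_le_iff (by norm_num) (by norm_num)]
    linarith
  · have hpos : 0 < φ n := one_half_pos.trans hn.1
    have hpos' : 0 < φ (n + 1) := one_half_pos.trans hn'.1
    rw [inertialWeight_add_le_iff hpos.ne' hpos'.ne']
    have hinv : (φ (n + 1))⁻¹ < 2 := by
      simpa only [one_div, inv_inv] using inv_strictAnti₀ one_half_pos hn'.1
    have hm : 0 < (φ n)⁻¹ + (φ (n + 1))⁻¹ - 1 := by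
      linarith [(one_le_inv₀ hpos).2 hφ, inv_pos.2 hpos']
    linarith [quadratic_le_of_le_positive_root (sub_pos.2 hinv) hm hθ hle]

section InnerProductSpace

variable {E : Type*} [NormedAddCommGroup E] [InnerProductSpace ℝ E]

lemma norm_one_sub_smul_add_smul_sq (u v : E) (t : ℝ) :
    ‖(1 - t) • u + t • v‖ ^ 2 =
      (1 - t) * ‖u‖ ^ 2 + t * ‖v‖ ^ 2 - t * (1 - t) * ‖u - v‖ ^ 2 := by
  rw [norm_add_sq_real, norm_sub_sq_real, norm_smul, norm_smul, real_inner_smul_left,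
    real_inner_smul_right, mul_pow, mul_pow, Real.norm_eq_abs, Real.norm_eq_abs, sq_abs, sq_abs]
  ring

lemma norm_relaxation_sub_sq_le {φ : ℝ} (hφ : 0 < φ) {p w z : E}
    (hz : ‖z - p‖ ≤ ‖w - p‖) :
    ‖(1 - φ) • w + φ • z - p‖ ^ 2 ≤
      ‖w - p‖ ^ 2 - φ⁻¹ * (1 - φ) * ‖(1 - φ) • w + φ • z - w‖ ^ 2 := by
  have hp : (1 - φ) • w + φ • z - p = (1 - φ) • (w - p) + φ • (z - p) := by module
  have hw : (1 - φ) • w + φ • z - w = -(φ • (w - z)) := by module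
  have hstep : φ⁻¹ * (1 - φ) * ‖(1 - φ) • w + φ • z - w‖ ^ 2 =
      φ * (1 - φ) * ‖w - z‖ ^ 2 := by
    rw [hw, norm_neg, norm_smul, Real.norm_of_nonneg hφ.le]
    field_simp
  have hsq : φ * ‖z - p‖ ^ 2 ≤ φ * ‖w - p‖ ^ 2 := by gcongr
  rw [hstep, hp, norm_one_sub_smul_add_smul_sq, sub_sub_sub_cancel_right]
  linarith

lemma norm_add_smul_sub_sub_sq (p x y : E) (θ : ℝ) :
    ‖x + θ • (x - y) - p‖ ^ 2 =
      (1 + θ) * ‖x - p‖ ^ 2 - θ * ‖y - p‖ ^ 2 + (1 + θ) * θ * ‖x - y‖ ^ 2 := by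
  have hp : x + θ • (x - y) - p = (1 - -θ) • (x - p) + -θ • (y - p) := by module
  rw [hp, norm_one_sub_smul_add_smul_sq, sub_sub_sub_cancel_right]
  ring

lemma le_norm_sub_smul_sq {θ : ℝ} (hθ : 0 ≤ θ) (u v : E) :
    (1 - θ) * (‖u‖ ^ 2 - θ * ‖v‖ ^ 2) ≤ ‖u - θ • v‖ ^ 2 := by
  have huv : u - θ • v = (1 - θ) • u + θ • (u - v) := by module
  have hnonneg : 0 ≤ θ * ‖u - v‖ ^ 2 := by positivity
  rw [huv, norm_one_sub_smul_add_smul_sq, sub_sub_cancel]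
  linarith

lemma norm_relaxed_inertial_step_le {θ φ : ℝ} (hθ : 0 ≤ θ) (hφ : φ ∈ Set.Ioc (0 : ℝ) 1)
    {p y x w z x' : E} (hw : w = x + θ • (x - y)) (hx' : x' = (1 - φ) • w + φ • z)
    (hz : ‖z - p‖ ≤ ‖w - p‖) :
    ‖x' - p‖ ^ 2 - θ * ‖x - p‖ ^ 2 + φ⁻¹ * (1 - φ) * (1 - θ) * ‖x' - x‖ ^ 2 ≤
      ‖x - p‖ ^ 2 - θ * ‖y - p‖ ^ 2 + inertialWeight θ φ * ‖x - y‖ ^ 2 := by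
  have hκ : 0 ≤ φ⁻¹ * (1 - φ) := mul_nonneg (inv_nonneg.2 hφ.1.le) (sub_nonneg.2 hφ.2)
  have hrelax : ‖x' - p‖ ^ 2 ≤ ‖w - p‖ ^ 2 - φ⁻¹ * (1 - φ) * ‖x' - w‖ ^ 2 :=
    hx' ▸ norm_relaxation_sub_sq_le hφ.1 hz
  have hinertial : ‖w - p‖ ^ 2 =
      (1 + θ) * ‖x - p‖ ^ 2 - θ * ‖y - p‖ ^ 2 + (1 + θ) * θ * ‖x - y‖ ^ 2 :=
    hw ▸ norm_add_smul_sub_sub_sq p x y θ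
  have hdisp : (1 - θ) * (‖x' - x‖ ^ 2 - θ * ‖x - y‖ ^ 2) ≤ ‖x' - w‖ ^ 2 := by
    rw [hw, ← sub_sub]
    exact le_norm_sub_smul_sq hθ (x' - x) (x - y)
  rw [inertialWeight]
  linarith [mul_le_mul_of_nonneg_left hdisp hκ]

theorem stmt8_general (wbar : E) (ε : ℝ) (x w z : ℕ → E) (θ φ : ℕ → ℝ)
    (hθ0 : ∀ n ≥ 1, 0 ≤ θ n) (hθmono : ∀ n ≥ 1, θ n ≤ θ (n + 1))
    (hφ : ∀ n ≥ 1, φ n ∈ Set.Ioc (0 : ℝ) 1)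
    (hw : ∀ n ≥ 1, w n = x n + θ n • (x n - x (n - 1)))
    (hx : ∀ n ≥ 1, x (n + 1) = (1 - φ n) • w n + φ n • z n)
    (hz : ∀ n ≥ 1, ‖z n - wbar‖ ≤ ‖w n - wbar‖)
    (δ Γ : ℕ → ℝ)
    (hδ : ∀ n ≥ 1, δ n = inertialWeight (θ n) (φ n))
    (hδε : ∀ n ≥ 1, δ (n + 1) + ε ≤ (φ n)⁻¹ * (1 - φ n) * (1 - θ (n + 1)))
    (hΓ : ∀ n ≥ 1, Γ n = ‖x n - wbar‖ ^ 2 - θ n * ‖x (n - 1) - wbar‖ ^ 2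
      + δ n * ‖x n - x (n - 1)‖ ^ 2) :
    ∀ n ≥ 1, Γ (n + 1) ≤ Γ n - ε * ‖x (n + 1) - x n‖ ^ 2 := by
  intro n hn
  have hκ : 0 ≤ (φ n)⁻¹ * (1 - φ n) :=
    mul_nonneg (inv_nonneg.2 (hφ n hn).1.le) (sub_nonneg.2 (hφ n hn).2)
  rw [le_sub_iff_add_le]
  calc Γ (n + 1) + ε * ‖x (n + 1) - x n‖ ^ 2
      = ‖x (n + 1) - wbar‖ ^ 2 - θ (n + 1) * ‖x n - wbar‖ ^ 2
          + (δ (n + 1) + ε) * ‖x (n + 1) - x n‖ ^ 2 := by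
        rw [hΓ (n + 1) (by lia), Nat.add_sub_cancel]
        ring
    _ ≤ ‖x (n + 1) - wbar‖ ^ 2 - θ (n + 1) * ‖x n - wbar‖ ^ 2
          + (φ n)⁻¹ * (1 - φ n) * (1 - θ (n + 1)) * ‖x (n + 1) - x n‖ ^ 2 := by
        gcongr
        exact hδε n hn
    _ ≤ ‖x (n + 1) - wbar‖ ^ 2 - θ n * ‖x n - wbar‖ ^ 2
          + (φ n)⁻¹ * (1 - φ n) * (1 - θ n) * ‖x (n + 1) - x n‖ ^ 2 := by
        gcongr <;> exact hθmono n hn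
    _ ≤ Γ n := by
        rw [hΓ n hn, hδ n hn]
        exact norm_relaxed_inertial_step_le (hθ0 n hn) (hφ n hn) (hw n hn) (hx n hn) (hz n hn)

end InnerProductSpace

theorem stmt8 {H : Type*} [NormedAddCommGroup H] [InnerProductSpace ℝ H]
    [CompleteSpace H]
    (wbar : H) (ε : ℝ) (hε : 0 < ε)
    (x w z : ℕ → H) (θ φ : ℕ → ℝ)
    (hθ1 : θ 1 = 0) (hθ0 : ∀ n ≥ 1, 0 ≤ θ n) (hθmono : ∀ n ≥ 1, θ n ≤ θ (n+1))
    (hφ : ∀ n ≥ 1, φ n ∈ Set.Ioc (0:ℝ) 1)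
    (h32 : ∀ n ≥ 1, Assumption32 ε θ φ n)
    (hw : ∀ n ≥ 1, w n = x n + θ n • (x n - x (n-1)))
    (hx : ∀ n ≥ 1, x (n+1) = (1 - φ n) • w n + φ n • z n)
    (hz : ∀ n ≥ 1, ‖z n - wbar‖ ≤ ‖w n - wbar‖)
    (δ Γ : ℕ → ℝ)
    (hδ : ∀ n, δ n = (1 + θ n)*θ n + (φ n)⁻¹*(1 - φ n)*(1 - θ n)*θ n)
    (hΓ : ∀ n ≥ 1, Γ n = ‖x n - wbar‖^2 - θ n * ‖x (n-1) - wbar‖^2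
      + δ n * ‖x n - x (n-1)‖^2) :
    ∀ n ≥ 1, Γ (n+1) ≤ Γ n - ε * ‖x (n+1) - x n‖^2 := by
  refine stmt8_general wbar ε x w z θ φ hθ0 hθmono hφ hw hx hz δ Γ (fun n _ ↦ hδ n) ?_ hΓ
  exact fun n hn ↦ hδ (n + 1) ▸
    (h32 n hn).inertialWeight_add_le (hθ0 (n + 1) (by lia)) (hφ n hn).2
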